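/- Let H ⊆ binom([n],3) be a 2-resilient 3-graph with matching number s ≥ 3. Then |H| ≤ (73/6)·s³ + 50. Moreover, for s ≥ 21, |H| ≤ (73/6)·s³. -/

import Mathlib

/-- The matching number of a hypergraph: the largest size of a set of
pairwise disjoint edges. -/
noncomputable def matchingNumber (H : Finset (Finset ℕ)) : ℕ :=
  sSup {m | ∃ M : Finset (Finset ℕ), M ⊆ H ∧ M.card = m ∧
    (M : Set (Finset ℕ)).PairwiseDisjoint id}

/-- A hypergraph is `t`-resilient if deleting any set of at most `t`
vertices does not decrease its matching number. -/
def Resilient (t : ℕ) (H : Finset (Finset ℕ)) : Prop :=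
  ∀ T : Finset ℕ, T.card ≤ t →
    matchingNumber (H.filter fun F => Disjoint F T) = matchingNumber H

/-- `S 0, …, S (r-1)` form a pseudo sunflower with center `C`:
the `S i` are distinct, `C` is a proper subset of one of them, and the
sets `S i \ C` are pairwise disjoint. -/
def IsPseudoSunflower {r : ℕ} (S : Fin r → Finset ℕ) (C : Finset ℕ) : Prop :=
  Function.Injective S ∧ (∃ i, C ⊂ S i) ∧
    ∀ i j, i ≠ j → Disjoint (S i \ C) (S j \ C)

/-- The covering (transversal) number of a hypergraph. -/
noncomputable def coverNumber (H : Finset (Finset ℕ)) : ℕ :=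
  sInf {m | ∃ Y : Finset ℕ, Y.card = m ∧ ∀ F ∈ H, (F ∩ Y).Nonempty}

/-!
Write `s` for the matching number. By resilience, for every set `T` of at most two vertices there
is a maximum matching that avoids `T`, and every edge containing `T` meets it; hence pairs of
vertices have degree at most `D = 3 s` and vertices degree at most `9 s ^ 2 = 3 D s`.

Fix a maximum matching and classify the edges by their trace on its vertices. Trading one or two
matching edges for more edges with disjoint traces is impossible. For one matching edge this shows
that if some vertex is the trace of more than `3 D` edges (it is *heavy*), then the other two
vertices are the trace of none. For two matching edges it gives at most four pairs of light
vertices, each the trace of at most two edges, such that at most three remaining pairs of light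
vertices are to be paid for by each matching edge without heavy vertices.

Edges with a heavy vertex are counted by degree, and edges through a remaining pair, or with two
vertices in the same matching edge, by codegree. A matching edge thus costs about `3 D s`, whether
it has a heavy vertex or not. All other edges have a single light vertex as trace, at most `3 D` per
matching edge, or have one of the chosen pairs as trace, at most `4 * 2` per two matching edges, or
consist of a chosen pair and a vertex of a third matching edge, at most `4 * 3` per three of them.
The total is `11 s ^ 3 + 7 s ^ 2`.
-/

open Finset

section Degree

variable {α : Type*} [DecidableEq α]

/-- The degree of a vertex set `T` in `H`: the number of edges of `H` containing `T`. -/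
def setDegree (H : Finset (Finset α)) (T : Finset α) : ℕ :=
  #{F ∈ H | T ⊆ F}

theorem setDegree_le_one {H : Finset (Finset α)} {r : ℕ} (hH : (H : Set (Finset α)).Sized r)
    {T : Finset α} (hT : r ≤ #T) : setDegree H T ≤ 1 := by
  have eq_of_mem : ∀ F ∈ ({F ∈ H | T ⊆ F} : Finset (Finset α)), T = F := fun F hF ↦
    eq_of_subset_of_card_le (mem_filter.1 hF).2 ((hH (mem_filter.1 hF).1).le.trans hT)
  exact card_le_one.2 fun F hF G hG ↦ (eq_of_mem F hF).symm.trans (eq_of_mem G hG)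

theorem card_le_setDegree {H 𝒢 : Finset (Finset α)} {T : Finset α} (h𝒢 : 𝒢 ⊆ H)
    (hT : ∀ G ∈ 𝒢, T ⊆ G) : #𝒢 ≤ setDegree H T :=
  card_le_card fun G hG ↦ mem_filter.2 ⟨h𝒢 hG, hT G hG⟩

theorem card_le_card_mul_of_forall_not_disjoint {𝒢 : Finset (Finset α)} {T : Finset α} {d : ℕ}
    (hT : ∀ G ∈ 𝒢, ¬Disjoint G T) (hd : ∀ y ∈ T, #{G ∈ 𝒢 | y ∈ G} ≤ d) : #𝒢 ≤ #T * d := by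
  refine le_trans (card_le_card fun G hG ↦ ?_)
    (card_biUnion_le_card_mul T (fun y ↦ {G ∈ 𝒢 | y ∈ G}) d hd)
  obtain ⟨y, hyG, hyT⟩ := not_disjoint_iff.1 (hT G hG)
  exact mem_biUnion.2 ⟨y, hyT, mem_filter.2 ⟨hG, hyG⟩⟩

theorem exists_disjoint_of_card_mul_lt {𝒢 : Finset (Finset α)} {T : Finset α} {d : ℕ}
    (hd : ∀ y ∈ T, #{G ∈ 𝒢 | y ∈ G} ≤ d) (h : #T * d < #𝒢) : ∃ G ∈ 𝒢, Disjoint G T := by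
  by_contra! hT
  exact h.not_ge (card_le_card_mul_of_forall_not_disjoint hT hd)

end Degree

section Resilient

variable {H M : Finset (Finset ℕ)}

theorem bddAbove_card_matching (H : Finset (Finset ℕ)) :
    BddAbove {m | ∃ M : Finset (Finset ℕ), M ⊆ H ∧ #M = m ∧
      (M : Set (Finset ℕ)).PairwiseDisjoint id} := by
  refine ⟨#H, ?_⟩
  rintro _ ⟨M, hMH, rfl, -⟩
  exact card_le_card hMH

theorem card_le_matchingNumber (hMH : M ⊆ H) (hM : (M : Set (Finset ℕ)).PairwiseDisjoint id) :
    #M ≤ matchingNumber H :=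
  le_csSup (bddAbove_card_matching H) ⟨M, hMH, rfl, hM⟩

theorem exists_card_eq_matchingNumber (H : Finset (Finset ℕ)) :
    ∃ M ⊆ H, #M = matchingNumber H ∧ (M : Set (Finset ℕ)).PairwiseDisjoint id :=
  Nat.sSup_mem (s := {m | ∃ M ⊆ H, #M = m ∧ (M : Set (Finset ℕ)).PairwiseDisjoint id})
    ⟨0, ∅, by simp⟩ (bddAbove_card_matching H)

theorem not_disjoint_biUnion_of_card_eq_matchingNumber (hMH : M ⊆ H)
    (hM : (M : Set (Finset ℕ)).PairwiseDisjoint id) (hcard : #M = matchingNumber H)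
    {F : Finset ℕ} (hF : F ∈ H) (hF₀ : F.Nonempty) : ¬Disjoint F (M.biUnion id) := by
  intro hdisj
  rw [disjoint_biUnion_right] at hdisj
  have hFM : F ∉ M := fun h ↦ (hdisj F h).ne hF₀.ne_empty rfl
  have := card_le_matchingNumber (insert_subset hF hMH) <| by
    rw [coe_insert, Set.pairwiseDisjoint_insert]
    exact ⟨hM, fun G hG _ ↦ hdisj G hG⟩
  rw [card_insert_of_notMem hFM] at this
  lia

-- Every edge containing `T` meets a maximum matching avoiding `T` in a vertex outside `T`.
theorem Resilient.setDegree_le_mul {t r d : ℕ} (hres : Resilient t H)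
    (hH : (H : Set (Finset ℕ)).Sized r) (hr : r ≠ 0) {T : Finset ℕ} (hT : #T ≤ t)
    (hd : ∀ z ∉ T, setDegree H (insert z T) ≤ d) :
    setDegree H T ≤ r * matchingNumber H * d := by
  obtain ⟨M, hMH, hcard, hM⟩ := exists_card_eq_matchingNumber {F ∈ H | Disjoint F T}
  rw [hres T hT] at hcard
  obtain ⟨hMH, hMT⟩ : M ⊆ H ∧ ∀ F ∈ M, Disjoint F T :=
    ⟨hMH.trans (filter_subset _ _), fun F hF ↦ (mem_filter.1 (hMH hF)).2⟩
  have hV : #(M.biUnion id) ≤ r * matchingNumber H := by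
    rw [← hcard, mul_comm]
    exact card_biUnion_le_card_mul _ _ _ fun F hF ↦ (hH (hMH hF)).le
  refine (card_le_card_mul_of_forall_not_disjoint (T := M.biUnion id) (fun F hF ↦ ?_)
    fun z hz ↦ ?_).trans (Nat.mul_le_mul_right d hV)
  · have hFH := (mem_filter.1 hF).1
    exact not_disjoint_biUnion_of_card_eq_matchingNumber hMH hM hcard hFH
      (card_pos.1 (by rw [hH hFH]; lia))
  · obtain ⟨G, hG, hzG⟩ := mem_biUnion.1 hz
    refine le_trans (card_le_card fun F hF ↦ ?_) (hd z (disjoint_left.1 (hMT G hG) hzG))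
    grind

theorem Resilient.setDegree_le_of_card_eq_two (hres : Resilient 2 H)
    (hH : (H : Set (Finset ℕ)).Sized 3) {T : Finset ℕ} (hT : #T = 2) :
    setDegree H T ≤ 3 * matchingNumber H := by
  simpa using hres.setDegree_le_mul hH three_ne_zero hT.le fun z hz ↦
    setDegree_le_one hH (by rw [card_insert_of_notMem hz, hT])

theorem Resilient.setDegree_singleton_le (hres : Resilient 2 H)
    (hH : (H : Set (Finset ℕ)).Sized 3) (x : ℕ) :
    setDegree H {x} ≤ 3 * matchingNumber H * (3 * matchingNumber H) :=
  hres.setDegree_le_mul hH three_ne_zero (by simp) fun z hz ↦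
    hres.setDegree_le_of_card_eq_two hH (card_pair (by simpa using hz))

end Resilient

section Trace

variable {α V : Type*} [DecidableEq α] [Fintype V] {v : V ↪ α} {F G : Finset α} {X : Finset V}

/-- The labels of the vertices of `F` that are labelled by `v`. -/
def trace (v : V ↪ α) (F : Finset α) : Finset V :=
  {x | v x ∈ F}

/-- The vertices of `F` that are not labelled by `v`. -/
def outerPart (v : V ↪ α) (F : Finset α) : Finset α :=
  F \ univ.map v

theorem mem_trace {x : V} : x ∈ trace v F ↔ v x ∈ F := by
  simp [trace]

theorem map_trace (v : V ↪ α) (F : Finset α) : (trace v F).map v = F ∩ univ.map v := by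
  ext; simp [mem_trace]; grind

theorem card_outerPart_add_card_trace (v : V ↪ α) (F : Finset α) :
    #(outerPart v F) + #(trace v F) = #F := by
  rw [← card_map v, map_trace, outerPart, card_sdiff_add_card_inter]

theorem mem_outerPart {w : α} : w ∈ outerPart v F ↔ w ∈ F ∧ w ∉ Set.range v := by
  simp [outerPart]

theorem disjoint_of_disjoint_trace (htr : Disjoint (trace v F) (trace v G))
    (hout : Disjoint G (outerPart v F)) : Disjoint F G := by
  refine disjoint_left.2 fun w hwF hwG ↦ disjoint_left.1 hout hwG (mem_outerPart.2 ⟨hwF, ?_⟩)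
  rintro ⟨x, rfl⟩
  exact disjoint_left.1 htr (mem_trace.2 hwF) (mem_trace.2 hwG)

variable [DecidableEq V]

/-- The edges of `H` with trace exactly `X`. -/
def traceClass (H : Finset (Finset α)) (v : V ↪ α) (X : Finset V) : Finset (Finset α) :=
  {F ∈ H | trace v F = X}

theorem mem_traceClass {H : Finset (Finset α)} :
    F ∈ traceClass H v X ↔ F ∈ H ∧ trace v F = X := by
  simp [traceClass]

theorem map_subset_of_mem_traceClass {H : Finset (Finset α)} (hF : F ∈ traceClass H v X) :
    X.map v ⊆ F := by
  obtain ⟨-, rfl⟩ := mem_traceClass.1 hF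
  exact (map_trace v F).trans_subset inter_subset_left

theorem card_outerPart_of_mem_traceClass {H : Finset (Finset α)} {r : ℕ}
    (hH : (H : Set (Finset α)).Sized r) (hF : F ∈ traceClass H v X) :
    #(outerPart v F) = r - #X := by
  obtain ⟨hFH, rfl⟩ := mem_traceClass.1 hF
  rw [← hH hFH, ← card_outerPart_add_card_trace v F, Nat.add_sub_cancel]

end Trace

section LabelledMatching

variable {α ι : Type*} [DecidableEq α] {r : ℕ}

/-- The edge with index `i` of a matching whose vertices are labelled by `v`. -/
def matchingEdge (v : ι × Fin r ↪ α) (i : ι) : Finset α :=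
  univ.image fun k ↦ v (i, k)

/-- `v` labels the vertices of a maximum matching of the `r`-graph `H`: its edges are indexed by
`ι`, and `v (i, 0), …, v (i, r - 1)` are the vertices of the edge with index `i`. -/
structure IsMaximumMatching [Fintype ι] (H : Finset (Finset α)) (v : ι × Fin r ↪ α) : Prop where
  matchingEdge_mem : ∀ i, matchingEdge v i ∈ H
  card_le : ∀ N ⊆ H, (N : Set (Finset α)).PairwiseDisjoint id → #N ≤ Fintype.card ι

theorem matchingEdge_nonempty [NeZero r] (v : ι × Fin r ↪ α) (i : ι) :
    (matchingEdge v i).Nonempty :=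
  univ_nonempty.image _

theorem disjoint_matchingEdge_right {v : ι × Fin r ↪ α} {F : Finset α} {i : ι} :
    Disjoint F (matchingEdge v i) ↔ ∀ k, v (i, k) ∉ F := by
  simp [matchingEdge, disjoint_right]

theorem pairwise_disjoint_matchingEdge (v : ι × Fin r ↪ α) :
    Pairwise (Function.onFun Disjoint (matchingEdge v)) := by
  intro i j hij
  rw [Function.onFun, disjoint_matchingEdge_right]
  simp [matchingEdge, hij]

theorem exists_labelling {M : Finset (Finset α)} (hr : (M : Set (Finset α)).Sized r)
    (hM : (M : Set (Finset α)).PairwiseDisjoint id) :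
    ∃ v : Fin #M × Fin r ↪ α, ∀ i, matchingEdge v i ∈ M := by
  let e : Fin #M ≃ M := M.equivFin.symm
  let f (F : M) : Fin r ≃ F.1 := (F.1.equivFinOfCardEq (hr F.2)).symm
  have f_mem (x : Fin #M × Fin r) : (f (e x.1) x.2 : α) ∈ (e x.1).1 := (f (e x.1) x.2).2
  refine ⟨⟨fun x ↦ f (e x.1) x.2, ?_⟩, fun i ↦ ?_⟩
  · rintro ⟨i, k⟩ ⟨j, l⟩ (h : (f (e i) k : α) = f (e j) l)
    have hij : i = j := e.injective <| Subtype.ext <|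
      hM.elim_finset (e i).2 (e j).2 _ (f_mem (i, k)) (by simpa only [id_eq, h] using f_mem (j, l))
    subst hij
    simpa using h
  · convert (e i).2
    refine eq_of_subset_of_card_le (image_subset_iff.2 fun k _ ↦ f_mem (i, k)) ?_
    rw [matchingEdge, card_image_of_injective _ fun k l h ↦ by simpa using h, hr (e i).2,
      card_univ, Fintype.card_fin]

theorem exists_isMaximumMatching {H : Finset (Finset ℕ)} (hH : (H : Set (Finset ℕ)).Sized r) :
    ∃ v : Fin (matchingNumber H) × Fin r ↪ ℕ, IsMaximumMatching H v := by
  obtain ⟨M, hMH, hcard, hM⟩ := exists_card_eq_matchingNumber H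
  obtain ⟨v, hv⟩ := exists_labelling (hH.mono hMH) hM
  rw [← hcard]
  refine ⟨v, fun i ↦ hMH (hv i), fun N hNH hN ↦ ?_⟩
  simpa [hcard] using card_le_matchingNumber hNH hN

-- Otherwise exchanging the matching edges with index in `I` for `N` gives a larger matching.
theorem IsMaximumMatching.card_le_of_trace [Fintype ι] [NeZero r]
    {H : Finset (Finset α)} {v : ι × Fin r ↪ α} (hv : IsMaximumMatching H v) {I : Finset ι}
    {N : Finset (Finset α)} (hNH : N ⊆ H) (hN : (N : Set (Finset α)).PairwiseDisjoint id)
    (hNI : ∀ F ∈ N, ∀ x ∈ trace v F, x.1 ∈ I) : #N ≤ #I := by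
  classical
  have hdisj : ∀ F ∈ N, ∀ i ∈ Iᶜ, Disjoint F (matchingEdge v i) := fun F hF i hi ↦
    disjoint_matchingEdge_right.2 fun k hk ↦ mem_compl.1 hi (hNI F hF _ (mem_trace.2 hk))
  have hinj : Function.Injective (matchingEdge v) := fun i j h ↦ by
    by_contra hij
    exact (pairwise_disjoint_matchingEdge v hij).ne (matchingEdge_nonempty v i).ne_empty h
  have hdisj' : Disjoint N (Iᶜ.image (matchingEdge v)) := by
    rw [disjoint_right, forall_mem_image]
    intro i hi hmem
    exact (hdisj _ hmem i hi).ne (matchingEdge_nonempty v i).ne_empty rfl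
  have hcard := hv.card_le (N ∪ Iᶜ.image (matchingEdge v))
    (union_subset hNH (image_subset_iff.2 fun i _ ↦ hv.matchingEdge_mem i)) <| by
      rw [coe_union]
      refine hN.union ?_ ?_
      · rw [coe_image, hinj.injOn.pairwiseDisjoint_image]
        exact (pairwise_disjoint_matchingEdge v).pairwiseDisjoint _
      · intro F hF G hG _
        obtain ⟨i, hi, rfl⟩ := mem_image.1 hG
        exact hdisj F hF i hi
  rw [card_union_of_disjoint hdisj', card_image_of_injective _ hinj] at hcard
  have := card_add_card_compl I
  lia

end LabelledMatching

section Exchange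

variable {α ι : Type*} [DecidableEq α] [Fintype ι] {r : ℕ} [NeZero r]
  {H : Finset (Finset α)} {v : ι × Fin r ↪ α}

theorem IsMaximumMatching.trace_nonempty (hv : IsMaximumMatching H v) {F : Finset α}
    (hF : F ∈ H) : (trace v F).Nonempty := by
  by_contra hempty
  rw [not_nonempty_iff_eq_empty] at hempty
  have := hv.card_le_of_trace (I := ∅) (singleton_subset_iff.2 hF) (by simp) (by simp [hempty])
  simp at this

theorem IsMaximumMatching.ne_of_disjoint (hv : IsMaximumMatching H v) {F G : Finset α}
    (hF : F ∈ H) (hFG : Disjoint F G) : F ≠ G := by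
  obtain ⟨x, hx⟩ := hv.trace_nonempty hF
  exact hFG.ne (nonempty_iff_ne_empty.1 ⟨v x, mem_trace.1 hx⟩)

theorem IsMaximumMatching.not_disjoint (hv : IsMaximumMatching H v) {i : ι} {F G : Finset α}
    (hF : F ∈ H) (hG : G ∈ H) (hFi : ∀ x ∈ trace v F, x.1 = i) (hGi : ∀ x ∈ trace v G, x.1 = i) :
    ¬Disjoint F G := by
  intro hFG
  have := hv.card_le_of_trace (I := {i}) (N := {F, G}) (by grind)
    (by simpa [Set.pairwiseDisjoint_insert] using fun _ ↦ hFG) (by simp; grind)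
  rw [card_pair (hv.ne_of_disjoint hF hFG), card_singleton] at this
  lia

theorem IsMaximumMatching.not_disjoint_of_disjoint (hv : IsMaximumMatching H v) {i j : ι}
    {A B C : Finset α} (hA : A ∈ H) (hB : B ∈ H) (hC : C ∈ H)
    (hAij : ∀ x ∈ trace v A, x.1 = i ∨ x.1 = j) (hBij : ∀ x ∈ trace v B, x.1 = i ∨ x.1 = j)
    (hCij : ∀ x ∈ trace v C, x.1 = i ∨ x.1 = j) (hAB : Disjoint A B) (hAC : Disjoint A C) :
    ¬Disjoint B C := by
  classical
  intro hBC
  have := hv.card_le_of_trace (I := {i, j}) (N := {A, B, C}) (by grind)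
    (by simp [Set.pairwiseDisjoint_insert, hAB, hAC, hBC]) (by simp; grind)
  rw [card_eq_three.2 ⟨A, B, C, hv.ne_of_disjoint hA hAB, hv.ne_of_disjoint hA hAC,
    hv.ne_of_disjoint hB hBC, rfl⟩] at this
  exact absurd (this.trans card_le_two) (by simp)

variable [DecidableEq ι] {X Y Z : Finset (ι × Fin r)} {F : Finset α}

theorem IsMaximumMatching.card_le_of_mem_traceClass (hv : IsMaximumMatching H v)
    (hH : (H : Set (Finset α)).Sized r) {i : ι} (hXi : ∀ x ∈ X, x.1 = i) (hYi : ∀ y ∈ Y, y.1 = i)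
    (hXY : Disjoint X Y) (hF : F ∈ traceClass H v X) {𝒢 : Finset (Finset α)}
    (h𝒢 : 𝒢 ⊆ traceClass H v Y) {d : ℕ} (hd : ∀ w ∈ outerPart v F, #{G ∈ 𝒢 | w ∈ G} ≤ d) :
    #𝒢 ≤ (r - #X) * d := by
  rw [← card_outerPart_of_mem_traceClass hH hF]
  refine card_le_card_mul_of_forall_not_disjoint (fun G hG hGF ↦ ?_) hd
  obtain ⟨hFH, rfl⟩ := mem_traceClass.1 hF
  obtain ⟨hGH, rfl⟩ := mem_traceClass.1 (h𝒢 hG)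
  exact hv.not_disjoint hFH hGH hXi hYi (disjoint_of_disjoint_trace hXY hGF)

-- Edges `A`, `B` with traces `X`, `Y` can be chosen disjoint greedily, and then every edge with
-- trace `Z` meets the outer part of `A` or of `B`: otherwise three disjoint edges would replace
-- the two matching edges with indices `i` and `j`.
theorem IsMaximumMatching.card_traceClass_le (hv : IsMaximumMatching H v)
    (hH : (H : Set (Finset α)).Sized r) {i j : ι} (hXij : ∀ x ∈ X, x.1 = i ∨ x.1 = j)
    (hYij : ∀ y ∈ Y, y.1 = i ∨ y.1 = j) (hZij : ∀ z ∈ Z, z.1 = i ∨ z.1 = j) (hXY : Disjoint X Y)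
    (hXZ : Disjoint X Z) (hYZ : Disjoint Y Z) {d e : ℕ}
    (hd : ∀ w ∉ Set.range v, #{G ∈ traceClass H v Y | w ∈ G} ≤ d)
    (he : ∀ w ∉ Set.range v, #{G ∈ traceClass H v Z | w ∈ G} ≤ e)
    (hX : (traceClass H v X).Nonempty) (hY : (r - #X) * d < #(traceClass H v Y)) :
    #(traceClass H v Z) ≤ ((r - #X) + (r - #Y)) * e := by
  obtain ⟨A, hA⟩ := hX
  have hAcard := card_outerPart_of_mem_traceClass hH hA
  obtain ⟨B, hB, hBA⟩ : ∃ B ∈ traceClass H v Y, Disjoint B (outerPart v A) :=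
    exists_disjoint_of_card_mul_lt (fun w hw ↦ hd w (mem_outerPart.1 hw).2) (by rwa [hAcard])
  have hBcard := card_outerPart_of_mem_traceClass hH hB
  obtain ⟨hAH, rfl⟩ := mem_traceClass.1 hA
  obtain ⟨hBH, rfl⟩ := mem_traceClass.1 hB
  have hAB : Disjoint A B := disjoint_of_disjoint_trace hXY hBA
  refine (card_le_card_mul_of_forall_not_disjoint (T := outerPart v A ∪ outerPart v B)
    (fun C hC hCAB ↦ ?_) fun w hw ↦ he w ?_).trans
      (Nat.mul_le_mul_right e ((card_union_le _ _).trans (by rw [hAcard, hBcard])))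
  · obtain ⟨hCH, rfl⟩ := mem_traceClass.1 hC
    rw [disjoint_union_right] at hCAB
    exact hv.not_disjoint_of_disjoint hAH hBH hCH hXij hYij hZij hAB
      (disjoint_of_disjoint_trace hXZ hCAB.1) (disjoint_of_disjoint_trace hYZ hCAB.2)
  · rcases mem_union.1 hw with hw | hw <;> exact (mem_outerPart.1 hw).2

end Exchange

section HeavyVertices

variable {α ι : Type*} [DecidableEq α] [Fintype ι] [DecidableEq ι] {H : Finset (Finset α)}
  {v : ι × Fin 3 ↪ α} {D : ℕ} {x y : ι × Fin 3} {i : ι}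

theorem card_traceClass_filter_mem_le {V : Type*} [Fintype V] [DecidableEq V]
    (H : Finset (Finset α)) (v : V ↪ α) (X : Finset V) (w : α) :
    #{F ∈ traceClass H v X | w ∈ F} ≤ setDegree H (insert w (X.map v)) := by
  refine card_le_setDegree (fun F hF ↦ (mem_traceClass.1 (mem_filter.1 hF).1).1) fun F hF ↦ ?_
  obtain ⟨hF, hw⟩ := mem_filter.1 hF
  exact insert_subset hw (map_subset_of_mem_traceClass hF)

theorem card_traceClass_singleton_filter_mem_le (hD : ∀ T, #T = 2 → setDegree H T ≤ D)
    (x : ι × Fin 3) {w : α} (hw : w ∉ Set.range v) :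
    #{F ∈ traceClass H v {x} | w ∈ F} ≤ D := by
  refine (card_traceClass_filter_mem_le H v {x} w).trans (hD _ ?_)
  rw [map_singleton, card_pair fun h ↦ hw ⟨x, h.symm⟩]

theorem card_traceClass_pair_filter_mem_le (hH : (H : Set (Finset α)).Sized 3) (hxy : x ≠ y)
    {w : α} (hw : w ∉ Set.range v) : #{F ∈ traceClass H v {x, y} | w ∈ F} ≤ 1 := by
  refine (card_traceClass_filter_mem_le H v {x, y} w).trans (setDegree_le_one hH ?_)
  rw [card_insert_of_notMem fun h ↦ hw (coe_map_subset_range v _ h), card_map, card_pair hxy]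

theorem IsMaximumMatching.card_traceClass_singleton_le_two_mul (hv : IsMaximumMatching H v)
    (hH : (H : Set (Finset α)).Sized 3) (hD : ∀ T, #T = 2 → setDegree H T ≤ D) (hxy : x ≠ y)
    (h₁ : x.1 = y.1) (hy : (traceClass H v {y}).Nonempty) : #(traceClass H v {x}) ≤ 2 * D := by
  obtain ⟨F, hF⟩ := hy
  simpa using hv.card_le_of_mem_traceClass hH (i := y.1) (by simp) (by simpa using h₁)
    (disjoint_singleton.2 hxy.symm) hF Subset.rfl fun w hw ↦
      card_traceClass_singleton_filter_mem_le hD x (mem_outerPart.1 hw).2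

theorem IsMaximumMatching.card_traceClass_singleton_le_four (hv : IsMaximumMatching H v)
    (hH : (H : Set (Finset α)).Sized 3) (hD : ∀ T, #T = 2 → setDegree H T ≤ D) (hxy : x ≠ y)
    (h₁ : x.1 = y.1) (hx : D < #(traceClass H v {x})) : #(traceClass H v {y}) ≤ 4 := by
  have hmeet {F : Finset α} (hF : F ∈ traceClass H v {x}) {𝒢 : Finset (Finset α)}
      (h𝒢 : 𝒢 ⊆ traceClass H v {y}) {d : ℕ} (hd : ∀ w ∈ outerPart v F, #{G ∈ 𝒢 | w ∈ G} ≤ d) :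
      #𝒢 ≤ 2 * d :=
    hv.card_le_of_mem_traceClass hH (i := y.1) (by simpa using h₁) (by simp)
      (disjoint_singleton.2 hxy) hF h𝒢 hd
  have hle_two : ∀ u ∉ Set.range v, #{G ∈ traceClass H v {y} | u ∈ G} ≤ 2 := by
    intro u hu
    obtain ⟨F, hF, hFu⟩ := exists_disjoint_of_card_mul_lt (T := {u}) (d := D)
      (fun w hw ↦ by
        rw [mem_singleton.1 hw]; exact card_traceClass_singleton_filter_mem_le hD x hu)
      (by simpa using hx)
    refine hmeet hF (filter_subset _ _) (d := 1) fun w hw ↦ ?_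
    obtain ⟨hwF, hw⟩ := mem_outerPart.1 hw
    have huw : u ≠ w := by
      rintro rfl
      exact disjoint_singleton_right.1 hFu hwF
    refine (card_le_setDegree (T := {u, w, v y}) (fun G hG ↦ ?_) fun G hG ↦ ?_).trans
      (setDegree_le_one hH ?_)
    · simp only [mem_filter, mem_traceClass] at hG
      exact hG.1.1.1
    · simp only [mem_filter] at hG
      have := map_subset_of_mem_traceClass hG.1.1
      grind
    · rw [card_eq_three.2 ⟨u, w, v y, huw, fun h ↦ hu ⟨y, h.symm⟩, fun h ↦ hw ⟨y, h.symm⟩, rfl⟩]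
  obtain ⟨F, hF⟩ := card_pos.1 (hx.trans_le' D.zero_le)
  exact hmeet hF Subset.rfl fun w hw ↦ hle_two w (mem_outerPart.1 hw).2

/-- The labels of the vertices that are the trace of more than `3 * D` edges. Every index carries
at most one of them when all pairs of vertices have degree at most `D`. -/
def heavyVertices (H : Finset (Finset α)) (v : ι × Fin 3 ↪ α) (D : ℕ) : Finset (ι × Fin 3) :=
  {x | 3 * D < #(traceClass H v {x})}

/-- The labels with index `i` of the vertices that are not heavy. -/
def lightVertices (H : Finset (Finset α)) (v : ι × Fin 3 ↪ α) (D : ℕ) (i : ι) :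
    Finset (ι × Fin 3) :=
  {x | x ∉ heavyVertices H v D ∧ x.1 = i}

/-- The indices of the matching edges without a heavy vertex. -/
def lightIndices (H : Finset (Finset α)) (v : ι × Fin 3 ↪ α) (D : ℕ) : Finset ι :=
  {i | ∀ k, (i, k) ∉ heavyVertices H v D}

theorem mem_heavyVertices : x ∈ heavyVertices H v D ↔ 3 * D < #(traceClass H v {x}) := by
  simp [heavyVertices]

theorem mem_lightVertices :
    x ∈ lightVertices H v D i ↔ x ∉ heavyVertices H v D ∧ x.1 = i := by
  simp [lightVertices]

theorem mem_lightIndices : i ∈ lightIndices H v D ↔ ∀ k, (i, k) ∉ heavyVertices H v D := by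
  simp [lightIndices]

theorem IsMaximumMatching.traceClass_eq_empty_of_mem_heavyVertices (hv : IsMaximumMatching H v)
    (hH : (H : Set (Finset α)).Sized 3) (hD : ∀ T, #T = 2 → setDegree H T ≤ D)
    (hx : x ∈ heavyVertices H v D) (hxy : x ≠ y) (h₁ : x.1 = y.1) :
    traceClass H v {y} = ∅ := by
  by_contra hy
  have := hv.card_traceClass_singleton_le_two_mul hH hD hxy h₁ (nonempty_iff_ne_empty.2 hy)
  have := mem_heavyVertices.1 hx
  lia

theorem IsMaximumMatching.injOn_fst_heavyVertices (hv : IsMaximumMatching H v)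
    (hH : (H : Set (Finset α)).Sized 3) (hD : ∀ T, #T = 2 → setDegree H T ≤ D) :
    Set.InjOn Prod.fst (heavyVertices H v D : Set (ι × Fin 3)) := by
  intro x hx y hy h₁
  by_contra hxy
  have := mem_heavyVertices.1 hy
  rw [hv.traceClass_eq_empty_of_mem_heavyVertices hH hD hx hxy h₁] at this
  simp at this

theorem IsMaximumMatching.card_heavyVertices_add_card_lightIndices (hv : IsMaximumMatching H v)
    (hH : (H : Set (Finset α)).Sized 3) (hD : ∀ T, #T = 2 → setDegree H T ≤ D) :
    #(heavyVertices H v D) + #(lightIndices H v D) = Fintype.card ι := by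
  have : (lightIndices H v D)ᶜ = (heavyVertices H v D).image Prod.fst := by
    ext i
    simp [mem_lightIndices]
  rw [← card_image_of_injOn (hv.injOn_fst_heavyVertices hH hD), ← this, card_compl_add_card]

theorem IsMaximumMatching.sum_card_traceClass_singleton_le (hv : IsMaximumMatching H v)
    (hH : (H : Set (Finset α)).Sized 3) (hD : ∀ T, #T = 2 → setDegree H T ≤ D) (hD₈ : 8 ≤ D)
    (hi : i ∈ lightIndices H v D) : ∑ k, #(traceClass H v {(i, k)}) ≤ 3 * D := by
  by_cases! h : ∀ k, #(traceClass H v {(i, k)}) ≤ D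
  · simpa using sum_le_card_nsmul univ _ D fun k _ ↦ h k
  obtain ⟨k, hk⟩ := h
  have hother : ∀ l ∈ univ.erase k, #(traceClass H v {(i, l)}) ≤ 4 := fun l hl ↦
    hv.card_traceClass_singleton_le_four hH hD (x := (i, k)) (by simpa [eq_comm] using hl) rfl hk
  rw [← add_sum_erase _ _ (mem_univ k)]
  by_cases! hempty : ∀ l ∈ univ.erase k, traceClass H v {(i, l)} = ∅
  · rw [sum_eq_zero fun l hl ↦ by rw [hempty l hl, card_empty], add_zero]
    simpa [mem_heavyVertices] using mem_lightIndices.1 hi k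
  · obtain ⟨l, hl, hne⟩ := hempty
    have := hv.card_traceClass_singleton_le_two_mul hH hD (x := (i, k)) (y := (i, l))
      (by simpa [eq_comm] using hl) rfl hne
    have := sum_le_card_nsmul _ _ 4 hother
    rw [card_erase_of_mem (mem_univ k), card_univ, Fintype.card_fin, smul_eq_mul] at this
    lia

end HeavyVertices

section CheapCells

variable {α ι : Type*} [DecidableEq α] [Fintype ι] [DecidableEq ι] {H : Finset (Finset α)}
  {v : ι × Fin 3 ↪ α} {D : ℕ} {i j : ι}

theorem IsMaximumMatching.exists_card_traceClass_pair_le_two (hv : IsMaximumMatching H v)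
    (hH : (H : Set (Finset α)).Sized 3) (hij : i ≠ j) {f : Fin 3 → Fin 3}
    (hf : Function.Injective f) : ∃ k, #(traceClass H v {(i, k), (j, f k)}) ≤ 2 := by
  by_contra! h
  have hne (k : Fin 3) : ((i, k) : ι × Fin 3) ≠ (j, f k) := by simp [hij]
  have hdisj {k l : Fin 3} (hkl : k ≠ l) :
      Disjoint ({(i, k), (j, f k)} : Finset (ι × Fin 3)) {(i, l), (j, f l)} := by
    simp [hij, hij.symm, hkl.symm, hf.eq_iff]
  have := hv.card_traceClass_le (i := i) (j := j) hH (by simp) (by simp) (by simp)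
    (hdisj (k := 0) (l := 1) (by decide)) (hdisj (l := 2) (by decide)) (hdisj (by decide))
    (fun _ ↦ card_traceClass_pair_filter_mem_le hH (hne 1))
    (fun _ ↦ card_traceClass_pair_filter_mem_le hH (hne 2)) (card_pos.1 (by grind))
    (by rw [card_pair (hne 0)]; grind)
  rw [card_pair (hne 0), card_pair (hne 1)] at this
  exact this.not_gt (h 2)

theorem IsMaximumMatching.card_traceClass_pair_le_two_or (hv : IsMaximumMatching H v)
    (hH : (H : Set (Finset α)).Sized 3) (hD : ∀ T, #T = 2 → setDegree H T ≤ D) (hij : i ≠ j)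
    {a k k' l l' : Fin 3} (ha : (i, a) ∈ heavyVertices H v D) (hk : k ≠ a) (hk' : k' ≠ a)
    (hkk' : k ≠ k') (hll' : l ≠ l') :
    #(traceClass H v {(i, k), (j, l)}) ≤ 2 ∨ #(traceClass H v {(i, k'), (j, l')}) ≤ 2 := by
  by_contra! h
  have hne (k l : Fin 3) : ((i, k) : ι × Fin 3) ≠ (j, l) := by simp [hij]
  have := hv.card_traceClass_le (X := {(i, k), (j, l)}) (Y := {(i, k'), (j, l')})
    (Z := {(i, a)}) (i := i) (j := j) hH (by simp) (by simp) (by simp)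
    (by simp [hij, hij.symm, hkk'.symm, hll'.symm]) (by simp [hij, hk.symm])
    (by simp [hij, hk'.symm])
    (fun _ ↦ card_traceClass_pair_filter_mem_le hH (hne k' l'))
    (fun _ ↦ card_traceClass_singleton_filter_mem_le hD (i, a)) (card_pos.1 (by lia))
    (by rw [card_pair (hne k l)]; lia)
  rw [card_pair (hne k l), card_pair (hne k' l')] at this
  have := mem_heavyVertices.1 ha
  lia

theorem IsMaximumMatching.traceClass_pair_eq_empty (hv : IsMaximumMatching H v)
    (hH : (H : Set (Finset α)).Sized 3) (hD : ∀ T, #T = 2 → setDegree H T ≤ D) (hij : i ≠ j)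
    {a b k l : Fin 3} (ha : (i, a) ∈ heavyVertices H v D) (hb : (j, b) ∈ heavyVertices H v D)
    (hk : k ≠ a) (hl : l ≠ b) : traceClass H v {(i, k), (j, l)} = ∅ := by
  by_contra h
  rw [mem_heavyVertices] at ha hb
  have hne : ((i, k) : ι × Fin 3) ≠ (j, l) := by simp [hij]
  have := hv.card_traceClass_le (X := {(i, k), (j, l)}) (Y := {(i, a)}) (Z := {(j, b)})
    (i := i) (j := j) hH (by simp) (by simp) (by simp)
    (by simp [hij, hk.symm]) (by simp [hij.symm, hl.symm]) (by simp [hij])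
    (fun _ ↦ card_traceClass_singleton_filter_mem_le hD (i, a))
    (fun _ ↦ card_traceClass_singleton_filter_mem_le hD (j, b)) (nonempty_iff_ne_empty.2 h)
    (by rw [card_pair hne]; lia)
  rw [card_pair hne, card_singleton] at this
  lia

/-- The pairs of light vertices in `R` are cheap, in the sense that few edges of `H` have one of
them as trace, and only few pairs of light vertices of the matching edges with indices `i` and `j`
are left out. Each light index pays for three of the pairs left out. -/
structure IsCheapCells (H : Finset (Finset α)) (v : ι × Fin 3 ↪ α) (D : ℕ) (i j : ι)
    (R : Finset ((ι × Fin 3) × (ι × Fin 3))) : Prop where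
  card_le : #R ≤ 4
  card_traceClass_le : ∀ p ∈ R, #(traceClass H v {p.1, p.2}) ≤ 2
  card_sdiff_le : #((lightVertices H v D i ×ˢ lightVertices H v D j) \ R) ≤
    3 * ((if i ∈ lightIndices H v D then 1 else 0) + if j ∈ lightIndices H v D then 1 else 0)

theorem IsCheapCells.swap {R : Finset ((ι × Fin 3) × (ι × Fin 3))}
    (hR : IsCheapCells H v D i j R) :
    IsCheapCells H v D j i (R.map ⟨Prod.swap, Prod.swap_injective⟩) where
  card_le := by rw [card_map]; exact hR.card_le
  card_traceClass_le := by
    rintro p hp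
    obtain ⟨q, hq, rfl⟩ := mem_map.1 hp
    simpa only [Function.Embedding.coeFn_mk, Prod.swap, pair_comm] using hR.card_traceClass_le q hq
  card_sdiff_le := by
    rw [← map_swap_product, ← Finset.map_sdiff, card_map, add_comm]
    exact hR.card_sdiff_le

theorem card_lightVertices_le (i : ι) :
    #(lightVertices H v D i) ≤ 2 + if i ∈ lightIndices H v D then 1 else 0 := by
  have h : lightVertices H v D i ⊆ image (i, ·) {k | (i, k) ∉ heavyVertices H v D} := by
    rintro ⟨_, k⟩ hx
    obtain ⟨hk, rfl⟩ := mem_lightVertices.1 hx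
    exact mem_image.2 ⟨k, by simpa using hk, rfl⟩
  refine (card_le_card h).trans (card_image_le.trans ?_)
  split_ifs with hi
  · exact card_le_univ _
  · simp only [mem_lightIndices, not_forall, not_not] at hi
    obtain ⟨a, ha⟩ := hi
    exact Nat.le_of_lt_succ (card_lt_univ_of_notMem (x := a) (by simpa using ha))

theorem isCheapCells_image (hij : i ∈ lightIndices H v D ∨ j ∈ lightIndices H v D)
    {f : Fin 3 → (ι × Fin 3) × (ι × Fin 3)} (hf : Function.Injective f)
    (hfL : ∀ c, f c ∈ lightVertices H v D i ×ˢ lightVertices H v D j)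
    (hfH : ∀ c, #(traceClass H v {(f c).1, (f c).2}) ≤ 2) :
    IsCheapCells H v D i j (univ.image f) where
  card_le := card_image_le.trans (by simp)
  card_traceClass_le := by simpa using hfH
  card_sdiff_le := by
    rw [card_sdiff_of_subset (image_subset_iff.2 fun c _ ↦ hfL c),
      card_image_of_injective _ hf, card_product, card_univ, Fintype.card_fin]
    have := Nat.mul_le_mul (card_lightVertices_le (H := H) (v := v) (D := D) i)
      (card_lightVertices_le (H := H) (v := v) (D := D) j)
    split_ifs at this ⊢ <;> simp_all

theorem IsMaximumMatching.mk_mem_lightVertices (hv : IsMaximumMatching H v)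
    (hH : (H : Set (Finset α)).Sized 3) (hD : ∀ T, #T = 2 → setDegree H T ≤ D) {a k : Fin 3}
    (ha : (i, a) ∈ heavyVertices H v D) (hk : k ≠ a) : (i, k) ∈ lightVertices H v D i := by
  refine mem_lightVertices.2 ⟨fun h ↦ hk ?_, rfl⟩
  simpa using hv.injOn_fst_heavyVertices hH hD h ha rfl

theorem IsMaximumMatching.exists_isCheapCells_of_mem_of_mem (hv : IsMaximumMatching H v)
    (hH : (H : Set (Finset α)).Sized 3) (hij : i ≠ j) (hi : i ∈ lightIndices H v D)
    (hj : j ∈ lightIndices H v D) : ∃ R, IsCheapCells H v D i j R := by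
  choose t ht using fun c ↦ hv.exists_card_traceClass_pair_le_two hH hij (add_left_injective c)
  refine ⟨_, isCheapCells_image (f := fun c ↦ ((i, t c), (j, t c + c))) (.inl hi) (fun c c' h ↦ ?_)
    (fun c ↦ ?_) ht⟩
  · simp only [Prod.mk.injEq, true_and] at h
    simpa [h.1] using h.2
  · exact mem_product.2 ⟨mem_lightVertices.2 ⟨mem_lightIndices.1 hi _, rfl⟩,
      mem_lightVertices.2 ⟨mem_lightIndices.1 hj _, rfl⟩⟩

theorem IsMaximumMatching.exists_isCheapCells_of_mem_heavyVertices (hv : IsMaximumMatching H v)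
    (hH : (H : Set (Finset α)).Sized 3) (hD : ∀ T, #T = 2 → setDegree H T ≤ D) (hij : i ≠ j)
    {a : Fin 3} (ha : (i, a) ∈ heavyVertices H v D) (hj : j ∈ lightIndices H v D) :
    ∃ R, IsCheapCells H v D i j R := by
  have hmem {k : Fin 3} (hk : k ≠ a) (l : Fin 3) :
      ((i, k), (j, l)) ∈ lightVertices H v D i ×ˢ lightVertices H v D j :=
    mem_product.2 ⟨hv.mk_mem_lightVertices hH hD ha hk,
      mem_lightVertices.2 ⟨mem_lightIndices.1 hj _, rfl⟩⟩
  have h₁ : a + 1 ≠ a := by simp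
  have h₂ : a + 2 ≠ a := by simp
  have h₁₂ : a + 1 ≠ a + 2 := by simp
  have hcell (c : Fin 3) : ∃ p, #(traceClass H v {p.1, p.2}) ≤ 2 ∧
      (p = ((i, a + 1), (j, c)) ∨ p = ((i, a + 2), (j, c + 1))) := by
    rcases hv.card_traceClass_pair_le_two_or hH hD hij ha h₁ h₂ h₁₂ (l := c) (l' := c + 1)
      (by simp) with h | h
    · exact ⟨((i, a + 1), (j, c)), h, .inl rfl⟩
    · exact ⟨((i, a + 2), (j, c + 1)), h, .inr rfl⟩
  choose f hfH hf using hcell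
  refine ⟨_, isCheapCells_image (.inr hj) (fun c c' h ↦ ?_) (fun c ↦ ?_) hfH⟩
  · rcases hf c with hc | hc <;> rcases hf c' with hc' | hc' <;>
      simpa using hc.symm.trans (h.trans hc')
  · rcases hf c with h | h <;> rw [h]
    exacts [hmem h₁ _, hmem h₂ _]

theorem IsMaximumMatching.exists_isCheapCells (hv : IsMaximumMatching H v)
    (hH : (H : Set (Finset α)).Sized 3) (hD : ∀ T, #T = 2 → setDegree H T ≤ D) (hij : i ≠ j) :
    ∃ R, IsCheapCells H v D i j R := by
  have hheavy {i : ι} : i ∉ lightIndices H v D → ∃ a, (i, a) ∈ heavyVertices H v D := by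
    simp [mem_lightIndices]
  by_cases hi : i ∈ lightIndices H v D <;> by_cases hj : j ∈ lightIndices H v D
  · exact hv.exists_isCheapCells_of_mem_of_mem hH hij hi hj
  · obtain ⟨b, hb⟩ := hheavy hj
    obtain ⟨R, hR⟩ := hv.exists_isCheapCells_of_mem_heavyVertices hH hD hij.symm hb hi
    exact ⟨_, hR.swap⟩
  · obtain ⟨a, ha⟩ := hheavy hi
    exact hv.exists_isCheapCells_of_mem_heavyVertices hH hD hij ha hj
  · obtain ⟨a, ha⟩ := hheavy hi
    obtain ⟨b, hb⟩ := hheavy hj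
    refine ⟨lightVertices H v D i ×ˢ lightVertices H v D j, ?_, ?_, by simp⟩
    · rw [card_product]
      exact Nat.mul_le_mul (by simpa [hi] using card_lightVertices_le (H := H) (v := v) (D := D) i)
        (by simpa [hj] using card_lightVertices_le (H := H) (v := v) (D := D) j)
    · rintro ⟨⟨i', k⟩, ⟨j', l⟩⟩ hp
      simp only [mem_product, mem_lightVertices] at hp
      obtain ⟨⟨hk, rfl⟩, hl, rfl⟩ := hp
      rw [hv.traceClass_pair_eq_empty hH hD hij ha hb (by grind) (by grind), card_empty]
      exact Nat.zero_le 2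

end CheapCells

section Counting

variable {α β ι : Type*}

theorem card_filter_exists_le_sum (S : Finset α) (T : Finset β) (P : β → α → Prop)
    [∀ b, DecidablePred (P b)] [DecidablePred fun a ↦ ∃ b ∈ T, P b a] :
    #{a ∈ S | ∃ b ∈ T, P b a} ≤ ∑ b ∈ T, #{a ∈ S | P b a} := by
  classical
  refine (card_le_card fun a ha ↦ ?_).trans card_biUnion_le
  obtain ⟨haS, b, hb, hP⟩ := mem_filter.1 ha
  exact mem_biUnion.2 ⟨b, hb, mem_filter.2 ⟨haS, hP⟩⟩

theorem card_filter_exists_le_card_mul {S : Finset α} {T : Finset β} {P : β → α → Prop}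
    [∀ b, DecidablePred (P b)] [DecidablePred fun a ↦ ∃ b ∈ T, P b a] {d : ℕ}
    (h : ∀ b ∈ T, #{a ∈ S | P b a} ≤ d) :
    #{a ∈ S | ∃ b ∈ T, P b a} ≤ #T * d :=
  (card_filter_exists_le_sum S T P).trans (sum_le_card_nsmul T _ d h)

variable [LinearOrder ι]

theorem exists_lt_of_card_eq_two [DecidableEq β] {X : Finset β} {f : β → ι} (hX : #X = 2)
    (hf : Set.InjOn f X) : ∃ x y, f x < f y ∧ X = {x, y} := by
  obtain ⟨x, y, hxy, rfl⟩ := card_eq_two.1 hX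
  rcases lt_or_gt_of_ne (hf.ne (by simp) (by simp) hxy) with h | h
  · exact ⟨x, y, h, rfl⟩
  · exact ⟨y, x, h, pair_comm x y⟩

theorem exists_lt_lt_of_card_eq_three [DecidableEq β] {X : Finset β} {f : β → ι} (hX : #X = 3)
    (hf : Set.InjOn f X) : ∃ x y z, f x < f y ∧ f y < f z ∧ X = {x, y, z} := by
  obtain ⟨x, hx, hmin⟩ := exists_min_image X f (card_pos.1 (by lia))
  have hcard : #(X.erase x) = 2 := by rw [card_erase_of_mem hx, hX]
  obtain ⟨y, z, hyz, hXx⟩ := exists_lt_of_card_eq_two hcard (hf.mono (erase_subset x X))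
  obtain ⟨hyx, hy⟩ : y ≠ x ∧ y ∈ X := by simpa using hXx.ge (mem_insert_self y {z})
  exact ⟨x, y, z, (hmin y hy).lt_of_ne (hf.ne hx hy hyx.symm), hyz, by rw [← hXx, insert_erase hx]⟩

variable [Fintype ι]

/-- The pairs `(i, j)` with `i < j`; they stand for the two-element subsets of `ι`. -/
def increasingPairs (ι : Type*) [LinearOrder ι] [Fintype ι] : Finset (ι × ι) :=
  {p | p.1 < p.2}

/-- The triples `(i, j, k)` with `i < j < k`; they stand for the three-element subsets of `ι`. -/
def increasingTriples (ι : Type*) [LinearOrder ι] [Fintype ι] : Finset (ι × ι × ι) :=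
  {p | p.1 < p.2.1 ∧ p.2.1 < p.2.2}

theorem mem_increasingPairs {p : ι × ι} : p ∈ increasingPairs ι ↔ p.1 < p.2 := by
  simp [increasingPairs]

theorem mem_increasingTriples {p : ι × ι × ι} :
    p ∈ increasingTriples ι ↔ p.1 < p.2.1 ∧ p.2.1 < p.2.2 := by
  simp [increasingTriples]

theorem card_increasingPairs_le : #(increasingPairs ι) ≤ (Fintype.card ι).choose 2 := by
  rw [← card_univ, ← card_powersetCard]
  refine card_le_card_of_injOn (fun p ↦ {p.1, p.2}) (fun p hp ↦ ?_) fun p hp q hq h ↦ ?_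
  · exact mem_powersetCard_univ.2 (card_pair (mem_increasingPairs.1 hp).ne)
  · have := mem_increasingPairs.1 hp
    have := mem_increasingPairs.1 hq
    simp only [Finset.ext_iff, mem_insert, mem_singleton] at h
    have := h p.1
    have := h p.2
    grind

theorem card_increasingTriples_le : #(increasingTriples ι) ≤ (Fintype.card ι).choose 3 := by
  rw [← card_univ, ← card_powersetCard]
  refine card_le_card_of_injOn (fun p ↦ {p.1, p.2.1, p.2.2}) (fun p hp ↦ ?_) fun p hp q hq h ↦ ?_
  · obtain ⟨h₁, h₂⟩ := mem_increasingTriples.1 hp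
    exact mem_powersetCard_univ.2 (card_eq_three.2 ⟨_, _, _, h₁.ne, (h₁.trans h₂).ne, h₂.ne, rfl⟩)
  · obtain ⟨h₁, h₂⟩ := mem_increasingTriples.1 hp
    obtain ⟨h₃, h₄⟩ := mem_increasingTriples.1 hq
    simp only [Finset.ext_iff, mem_insert, mem_singleton] at h
    have := h p.1
    have := h p.2.1
    have := h p.2.2
    grind

theorem sum_increasingPairs_add_sum (f : ι → ℕ) :
    ∑ p ∈ increasingPairs ι, (f p.1 + f p.2) + ∑ i, f i = Fintype.card ι * ∑ i, f i := by
  have hsplit (i j : ι) :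
      (if i < j then f i else 0) + (if j < i then f i else 0) + (if i = j then f i else 0)
        = f i := by
    rcases lt_trichotomy i j with h | rfl | h <;> simp [*, ne_of_lt, ne_of_gt, not_lt_of_gt]
  calc
    _ = ∑ i, ∑ j, (if i < j then f i else 0) + ∑ i, ∑ j, (if j < i then f i else 0)
          + ∑ i, ∑ j, if i = j then f i else 0 := by
        rw [increasingPairs, sum_add_distrib, sum_filter, sum_filter, Fintype.sum_prod_type,
          Fintype.sum_prod_type_right]
        simp
    _ = ∑ i, ∑ _j : ι, f i := by simp only [← sum_add_distrib, hsplit]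
    _ = Fintype.card ι * ∑ i, f i := by simp [mul_sum]

end Counting

section EdgeCount

variable {α ι : Type*} [DecidableEq α] [Fintype ι] {H : Finset (Finset α)} {D : ℕ}

theorem card_filter_exists_mem_le {V : Type*} {v : V ↪ α} {d : ℕ}
    (hd : ∀ a, setDegree H {a} ≤ d) (S : Finset V) : #{F ∈ H | ∃ x ∈ S, v x ∈ F} ≤ #S * d :=
  card_filter_exists_le_card_mul fun x _ ↦ by
    simpa [setDegree] using hd (v x)

variable [LinearOrder ι] {v : ι × Fin 3 ↪ α} {R : ι → ι → Finset ((ι × Fin 3) × (ι × Fin 3))}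

/-- The edges of `H` without heavy vertices that have at most one vertex in each edge of the
matching labelled by `v`. -/
def lightTransversals (H : Finset (Finset α)) (v : ι × Fin 3 ↪ α) (D : ℕ) : Finset (Finset α) :=
  {F ∈ H | ∀ x ∈ trace v F, x ∉ heavyVertices H v D ∧ ∀ y ∈ trace v F, x.1 = y.1 → x = y}

theorem card_filter_exists_fst_eq_le (hD : ∀ T, #T = 2 → setDegree H T ≤ D) :
    #{F ∈ H | ∃ x ∈ trace v F, ∃ y ∈ trace v F, x.1 = y.1 ∧ x ≠ y} ≤
      Fintype.card ι * (3 * D) := by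
  have hpair : ∀ p ∈ (univ : Finset ι) ×ˢ powersetCard 2 (univ : Finset (Fin 3)),
      #{F ∈ H | p.2.image (fun k ↦ v (p.1, k)) ⊆ F} ≤ D := fun p hp ↦ hD _ <| by
    rw [card_image_of_injective _ fun k l h ↦ by simpa using h,
      mem_powersetCard_univ.1 (mem_product.1 hp).2]
  refine (card_le_card (monotone_filter_right H ?_)).trans
    ((card_filter_exists_le_card_mul hpair).trans_eq (by simp [mul_assoc]))
  rintro F _ ⟨⟨i, k⟩, hk, ⟨_, l⟩, hl, rfl, hkl⟩
  refine ⟨(i, {k, l}), mem_product.2 ⟨mem_univ i, mem_powersetCard_univ.2 ?_⟩, ?_⟩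
  · exact card_pair (by simpa using hkl)
  · simpa [insert_subset_iff] using ⟨mem_trace.1 hk, mem_trace.1 hl⟩

theorem card_le_add_card_lightTransversals {d : ℕ} (hd : ∀ a, setDegree H {a} ≤ d)
    (hD : ∀ T, #T = 2 → setDegree H T ≤ D) (v : ι × Fin 3 ↪ α) :
    #H ≤ #(heavyVertices H v D) * d + Fintype.card ι * (3 * D) + #(lightTransversals H v D) := by
  grw [← card_filter_exists_mem_le (v := v) hd, ← card_filter_exists_fst_eq_le (v := v) hD,
    ← card_union_le, ← card_union_le]
  refine card_le_card fun F hF ↦ ?_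
  simp only [lightTransversals, mem_union, mem_filter, mem_trace, hF, true_and]
  grind

theorem IsMaximumMatching.card_filter_exists_trace_eq_singleton_le
    (hv : IsMaximumMatching H v) (hH : (H : Set (Finset α)).Sized 3)
    (hD : ∀ T, #T = 2 → setDegree H T ≤ D) (hD₈ : 8 ≤ D) :
    #{F ∈ H | ∃ i ∈ lightIndices H v D, ∃ k ∈ univ, trace v F = {(i, k)}} ≤
      #(lightIndices H v D) * (3 * D) :=
  card_filter_exists_le_card_mul fun _ hi ↦ (card_filter_exists_le_sum H univ _).trans
    (hv.sum_card_traceClass_singleton_le hH hD hD₈ hi)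

theorem card_filter_exists_mem_sdiff_le (hD : ∀ T, #T = 2 → setDegree H T ≤ D)
    (hR : ∀ i j, i < j → IsCheapCells H v D i j (R i j)) :
    #{F ∈ H | ∃ p ∈ increasingPairs ι,
      ∃ c ∈ (lightVertices H v D p.1 ×ˢ lightVertices H v D p.2) \ R p.1 p.2,
        {v c.1, v c.2} ⊆ F} + 3 * D * #(lightIndices H v D) ≤
      3 * D * Fintype.card ι * #(lightIndices H v D) := by
  have hpair : ∀ p ∈ increasingPairs ι,
      #{F ∈ H | ∃ c ∈ (lightVertices H v D p.1 ×ˢ lightVertices H v D p.2) \ R p.1 p.2,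
        {v c.1, v c.2} ⊆ F} ≤ 3 * D * ((if p.1 ∈ lightIndices H v D then 1 else 0) +
          if p.2 ∈ lightIndices H v D then 1 else 0) := by
    intro p hp
    have hlt := mem_increasingPairs.1 hp
    refine (card_filter_exists_le_card_mul fun c hc ↦ hD _ (card_pair fun h ↦ ?_)).trans
      ((Nat.mul_le_mul_right D (hR _ _ hlt).card_sdiff_le).trans_eq (by ring))
    obtain ⟨hc₁, hc₂⟩ := mem_product.1 (mem_sdiff.1 hc).1
    rw [← (mem_lightVertices.1 hc₁).2, ← (mem_lightVertices.1 hc₂).2, v.injective h] at hlt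
    exact hlt.false
  have hsum := sum_increasingPairs_add_sum fun i ↦ if i ∈ lightIndices H v D then 1 else 0
  rw [sum_boole, filter_mem_eq_inter, univ_inter, Nat.cast_id] at hsum
  calc
    _ ≤ ∑ p ∈ increasingPairs ι, 3 * D * ((if p.1 ∈ lightIndices H v D then 1 else 0) +
          if p.2 ∈ lightIndices H v D then 1 else 0) + 3 * D * #(lightIndices H v D) :=
      Nat.add_le_add_right ((card_filter_exists_le_sum H _ _).trans (sum_le_sum hpair)) _
    _ = 3 * D * Fintype.card ι * #(lightIndices H v D) := by
      rw [← mul_sum, ← mul_add, hsum, ← mul_assoc]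

theorem card_filter_exists_trace_eq_pair_le
    (hR : ∀ i j, i < j → IsCheapCells H v D i j (R i j)) :
    #{F ∈ H | ∃ p ∈ increasingPairs ι, ∃ c ∈ R p.1 p.2, trace v F = {c.1, c.2}} ≤
      8 * (Fintype.card ι).choose 2 := by
  refine (card_filter_exists_le_card_mul (d := 8) fun p hp ↦ ?_).trans
    ((Nat.mul_le_mul_right 8 card_increasingPairs_le).trans_eq (mul_comm _ _))
  have hRp := hR _ _ (mem_increasingPairs.1 hp)
  exact (card_filter_exists_le_card_mul hRp.card_traceClass_le).trans
    (Nat.mul_le_mul_right 2 hRp.card_le)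

theorem card_filter_exists_eq_map_le (hR : ∀ i j, i < j → IsCheapCells H v D i j (R i j)) :
    #{F ∈ H | ∃ p ∈ increasingTriples ι, ∃ c ∈ R p.1 p.2.1, ∃ k ∈ univ,
      F = map v {c.1, c.2, (p.2.2, k)}} ≤ 12 * (Fintype.card ι).choose 3 := by
  refine (card_filter_exists_le_card_mul (d := 12) fun p hp ↦ ?_).trans
    ((Nat.mul_le_mul_right 12 card_increasingTriples_le).trans_eq (mul_comm _ _))
  refine (card_filter_exists_le_card_mul (d := 3) fun c _ ↦ ?_).trans
    (Nat.mul_le_mul_right 3 (hR _ _ (mem_increasingTriples.1 hp).1).card_le)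
  refine (card_filter_exists_le_card_mul (d := 1) fun k _ ↦ card_le_one.2 ?_).trans_eq (by simp)
  simp +contextual

theorem map_trace_eq_self {V : Type*} [Fintype V] {v : V ↪ α} {F : Finset α}
    (h : #F ≤ #(trace v F)) : (trace v F).map v = F :=
  eq_of_subset_of_card_le ((map_trace v F).trans_subset inter_subset_left) (by rwa [card_map])

theorem IsMaximumMatching.mem_lightIndices_of_trace_eq_singleton (hv : IsMaximumMatching H v)
    (hH : (H : Set (Finset α)).Sized 3) (hD : ∀ T, #T = 2 → setDegree H T ≤ D) {F : Finset α}
    (hF : F ∈ H) {x : ι × Fin 3} (hx : x ∉ heavyVertices H v D) (hFx : trace v F = {x}) :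
    x.1 ∈ lightIndices H v D := by
  refine mem_lightIndices.2 fun k hk ↦ ?_
  have := hv.traceClass_eq_empty_of_mem_heavyVertices hH hD hk (y := x) (fun h ↦ hx (h ▸ hk)) rfl
  exact eq_empty_iff_forall_notMem.1 this F (mem_traceClass.2 ⟨hF, hFx⟩)

theorem IsMaximumMatching.exists_of_mem_lightTransversals (hv : IsMaximumMatching H v)
    (hH : (H : Set (Finset α)).Sized 3) (hD : ∀ T, #T = 2 → setDegree H T ≤ D)
    (R : ι → ι → Finset ((ι × Fin 3) × (ι × Fin 3))) {F : Finset α}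
    (hF : F ∈ lightTransversals H v D) :
    (∃ i ∈ lightIndices H v D, ∃ k ∈ univ, trace v F = {(i, k)}) ∨
    (∃ p ∈ increasingPairs ι,
      ∃ c ∈ (lightVertices H v D p.1 ×ˢ lightVertices H v D p.2) \ R p.1 p.2,
        {v c.1, v c.2} ⊆ F) ∨
    (∃ p ∈ increasingPairs ι, ∃ c ∈ R p.1 p.2, trace v F = {c.1, c.2}) ∨
    ∃ p ∈ increasingTriples ι, ∃ c ∈ R p.1 p.2.1, ∃ k ∈ univ, F = map v {c.1, c.2, (p.2.2, k)} := by
  obtain ⟨hF, hlight⟩ := mem_filter.1 hF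
  have hinj : Set.InjOn Prod.fst (trace v F : Set (ι × Fin 3)) := fun x hx ↦ (hlight x hx).2
  have hmem {x : ι × Fin 3} (hx : x ∈ trace v F) : x ∈ lightVertices H v D x.1 :=
    mem_lightVertices.2 ⟨(hlight x hx).1, rfl⟩
  have hcell {x y : ι × Fin 3} (hxF : x ∈ trace v F) (hyF : y ∈ trace v F)
      (hxy : (x, y) ∉ R x.1 y.1) :
      ∃ c ∈ (lightVertices H v D x.1 ×ˢ lightVertices H v D y.1) \ R x.1 y.1,
        {v c.1, v c.2} ⊆ F := by
    refine ⟨(x, y), mem_sdiff.2 ⟨mem_product.2 ⟨hmem hxF, hmem hyF⟩, hxy⟩, ?_⟩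
    simpa [insert_subset_iff] using ⟨mem_trace.1 hxF, mem_trace.1 hyF⟩
  have hpos : 0 < #(trace v F) := (hv.trace_nonempty hF).card_pos
  have hle : #(trace v F) ≤ 3 :=
    (Nat.le_add_left _ _).trans_eq ((card_outerPart_add_card_trace v F).trans (hH hF))
  interval_cases hcard : #(trace v F)
  · obtain ⟨x, hx⟩ := card_eq_one.1 hcard
    have hxF := mem_lightVertices.1 (hmem (hx.ge (mem_singleton_self x)))
    exact .inl ⟨x.1, hv.mem_lightIndices_of_trace_eq_singleton hH hD hF hxF.1 hx, x.2,
      mem_univ _, hx⟩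
  · obtain ⟨x, y, hlt, hxy⟩ := exists_lt_of_card_eq_two hcard hinj
    by_cases hR : (x, y) ∈ R x.1 y.1
    · exact .inr (.inr (.inl ⟨(x.1, y.1), mem_increasingPairs.2 hlt, (x, y), hR, hxy⟩))
    · exact .inr (.inl ⟨(x.1, y.1), mem_increasingPairs.2 hlt,
        hcell (by simp [hxy]) (by simp [hxy]) hR⟩)
  · obtain ⟨x, y, z, hlt, hlt', hxyz⟩ := exists_lt_lt_of_card_eq_three hcard hinj
    by_cases hR : (x, y) ∈ R x.1 y.1
    · refine .inr (.inr (.inr ⟨(x.1, y.1, z.1), mem_increasingTriples.2 ⟨hlt, hlt'⟩, (x, y), hR,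
        z.2, mem_univ _, ?_⟩))
      rw [Prod.mk.eta, ← hxyz, map_trace_eq_self (by rw [hcard, hH hF])]
    · exact .inr (.inl ⟨(x.1, y.1), mem_increasingPairs.2 hlt,
        hcell (by simp [hxyz]) (by simp [hxyz]) hR⟩)

theorem IsMaximumMatching.card_lightTransversals_le (hv : IsMaximumMatching H v)
    (hH : (H : Set (Finset α)).Sized 3) (hD : ∀ T, #T = 2 → setDegree H T ≤ D) (hD₈ : 8 ≤ D) :
    #(lightTransversals H v D) ≤ 3 * D * Fintype.card ι * #(lightIndices H v D) +
      8 * (Fintype.card ι).choose 2 + 12 * (Fintype.card ι).choose 3 := by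
  choose! R hR using fun i j (hij : i < j) ↦ hv.exists_isCheapCells hH hD hij.ne
  have hcover := card_le_card (s := lightTransversals H v D) fun F hF ↦
    mem_filter.2 ⟨(mem_filter.1 hF).1, hv.exists_of_mem_lightTransversals hH hD R hF⟩
  simp only [filter_or] at hcover
  grw [card_union_le, card_union_le, card_union_le,
    hv.card_filter_exists_trace_eq_singleton_le hH hD hD₈, card_filter_exists_trace_eq_pair_le hR,
    card_filter_exists_eq_map_le hR] at hcover
  have := card_filter_exists_mem_sdiff_le hD hR
  lia

theorem IsMaximumMatching.card_le_of_setDegree_le (hv : IsMaximumMatching H v)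
    (hH : (H : Set (Finset α)).Sized 3) (hD : ∀ T, #T = 2 → setDegree H T ≤ D) (hD₈ : 8 ≤ D)
    (hd : ∀ a, setDegree H {a} ≤ 3 * D * Fintype.card ι) :
    #H ≤ 3 * D * Fintype.card ι ^ 2 + 3 * D * Fintype.card ι + 8 * (Fintype.card ι).choose 2 +
      12 * (Fintype.card ι).choose 3 := by
  have hsum := hv.card_heavyVertices_add_card_lightIndices hH hD
  calc
    #H ≤ #(heavyVertices H v D) * (3 * D * Fintype.card ι) + Fintype.card ι * (3 * D) +
        (3 * D * Fintype.card ι * #(lightIndices H v D) + 8 * (Fintype.card ι).choose 2 +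
          12 * (Fintype.card ι).choose 3) := by
      grw [card_le_add_card_lightTransversals hd hD v, hv.card_lightTransversals_le hH hD hD₈]
    _ = 3 * D * Fintype.card ι * (#(heavyVertices H v D) + #(lightIndices H v D)) +
        3 * D * Fintype.card ι + 8 * (Fintype.card ι).choose 2 +
          12 * (Fintype.card ι).choose 3 := by ring
    _ = _ := by rw [hsum]; ring

end EdgeCount

theorem eight_mul_choose_two_add_twelve_mul_choose_three (n : ℕ) :
    8 * n.choose 2 + 12 * n.choose 3 + 2 * n ^ 2 = 2 * n ^ 3 := by
  induction n with
  | zero => rfl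
  | succ n ih =>
    rw [Nat.choose_succ_succ' n 1, Nat.choose_succ_succ' n 2, Nat.choose_one_right]
    qify at ih ⊢
    linear_combination ih + 12 * Nat.cast_choose_two ℚ n

theorem stmt13_general {H : Finset (Finset ℕ)} (hH : (H : Set (Finset ℕ)).Sized 3)
    (hres : Resilient 2 H) (hs : 3 ≤ matchingNumber H) :
    #H ≤ 11 * matchingNumber H ^ 3 + 7 * matchingNumber H ^ 2 := by
  obtain ⟨v, hv⟩ := exists_isMaximumMatching hH
  have hcard := hv.card_le_of_setDegree_le hH (fun T hT ↦ hres.setDegree_le_of_card_eq_two hH hT)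
    (by lia) fun a ↦ (hres.setDegree_singleton_le hH a).trans_eq (by rw [Fintype.card_fin]; ring)
  rw [Fintype.card_fin] at hcard
  have := eight_mul_choose_two_add_twelve_mul_choose_three (matchingNumber H)
  lia

/-- A 2-resilient 3-graph with matching number `s ≥ 3` has at most
`73/6·s³ + 50` edges, and at most `73/6·s³` edges when `s ≥ 21`. -/
theorem stmt13 (n s : ℕ) (hs : 3 ≤ s) (H : Finset (Finset ℕ))
    (hH : H ⊆ (Finset.range n).powersetCard 3)
    (hres : Resilient 2 H) (hν : matchingNumber H = s) :
    (H.card : ℚ) ≤ 73 / 6 * (s : ℚ) ^ 3 + 50 ∧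
    (21 ≤ s → (H.card : ℚ) ≤ 73 / 6 * (s : ℚ) ^ 3) := by
  subst hν
  have hcard : (#H : ℚ) ≤ 11 * (matchingNumber H : ℚ) ^ 3 + 7 * (matchingNumber H : ℚ) ^ 2 :=
    mod_cast stmt13_general (fun F hF ↦ (mem_powersetCard.1 (hH hF)).2) hres hs
  have hs' : (3 : ℚ) ≤ matchingNumber H := mod_cast hs
  refine ⟨hcard.trans ?_, fun hs₂₁ ↦ hcard.trans ?_⟩
  · nlinarith [mul_nonneg (hs'.trans' (by norm_num)) (sq_nonneg ((matchingNumber H : ℚ) - 4)),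
      sq_nonneg ((matchingNumber H : ℚ) - 4)]
  · have : (21 : ℚ) ≤ matchingNumber H := mod_cast hs₂₁
    nlinarith [sq_nonneg (matchingNumber H : ℚ)]
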